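/- Let G be a (bounded integral) left-residuated po-groupoid satisfying the double negation law ¬¬x = x and the equation (x → y) → y = (y → x) → x, where x → y = ¬x/¬y. Define x ⊕ y = x/¬y. Then (G, ⊕, ¬, 0) is a basic algebra (it satisfies x ⊕ 0 = x; ¬¬x = x; ¬(¬x ⊕ y) ⊕ y = ¬(¬y ⊕ x) ⊕ x; ¬(¬(¬(x ⊕ y) ⊕ y) ⊕ z) ⊕ (x ⊕ z) = ¬0), and moreover x ⊕ ¬y = x/y and ¬(¬x ⊕ ¬y) = x·y for all x, y. -/

import Mathlib

/-!
Residuation and `¬¬y = y` give `y ≤ x / ¬y`, that is, `y ≤ x → y`. The Łukasiewicz identity turns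
this into `x ≤ (x → y) → y`, which has two consequences. First, `¬` reverses the order: `¬y ≤ ¬x`
makes `x → y` equal to `1`, so `x ≤ 1 → y = y`. Second, the product is a term in `/` and `¬`, namely
`x * y = ¬(¬x / y)`. The last basic algebra axiom says that the inequality `¬((¬x → y) → y) ≤ x` is
preserved by the monotone map `t ↦ t ⊕ w`.
-/

/-- A bounded integral left-residuated po-groupoid. The least element is written `⊥`, and the
multiplicative identity `1` is the greatest element. -/
class LeftResiduatedPoGroupoid (G : Type*) extends
    PartialOrder G, OrderBot G, MulOneClass G, Div G where
  le_one : ∀ x : G, x ≤ 1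
  mul_le_iff_le_div : ∀ {x y w : G}, x * y ≤ w ↔ x ≤ w / y

/-- A basic algebra, presented by its sum, negation and zero. The last axiom has `neg zero` as
right-hand side because the constant `1` is not part of the signature. -/
structure IsBasicAlgebra {A : Type*} (add : A → A → A) (neg : A → A) (zero : A) : Prop where
  add_zero : ∀ x, add x zero = x
  neg_neg : ∀ x, neg (neg x) = x
  lukasiewicz : ∀ x y, add (neg (add (neg x) y)) y = add (neg (add (neg y) x)) x
  add_left_mono : ∀ x y w,
    add (neg (add (neg (add (neg (add x y)) y)) w)) (add x w) = neg zero

namespace LeftResiduatedPoGroupoid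

variable {G : Type*} [LeftResiduatedPoGroupoid G]

/-- The negation `¬x = 0 / x`, written `∼x`. -/
def neg (x : G) : G := ⊥ / x

local prefix:max "∼" => neg

/-- The implication `x → y = ¬x / ¬y`, written `x ⇒ y`. -/
def imp (x y : G) : G := ∼x / ∼y

local infixr:60 "⇒" => imp

/-- The sum `x ⊕ y = x / ¬y` of the associated basic algebra, written `x ∔ y`. -/
def add (x y : G) : G := x / ∼y

local infixl:65 "∔" => add

theorem div_mul_le (x y : G) : x / y * y ≤ x :=
  mul_le_iff_le_div.2 le_rfl

theorem le_mul_div (x y : G) : x ≤ x * y / y :=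
  mul_le_iff_le_div.1 le_rfl

theorem div_one (x : G) : x / 1 = x :=
  le_antisymm (by simpa only [mul_one] using div_mul_le x 1)
    (by simpa only [mul_one] using le_mul_div x 1)

theorem div_le_div_right {x y : G} (h : x ≤ y) (w : G) : x / w ≤ y / w :=
  mul_le_iff_le_div.1 ((div_mul_le x w).trans h)

theorem div_eq_one_iff {x y : G} : x / y = 1 ↔ y ≤ x := by
  rw [← (le_one (x / y)).ge_iff_eq, ← mul_le_iff_le_div, one_mul]

theorem neg_one : ∼(1 : G) = ⊥ :=
  div_one ⊥

theorem neg_bot : ∼(⊥ : G) = 1 :=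
  div_eq_one_iff.2 le_rfl

theorem add_bot (x : G) : x ∔ ⊥ = x := by
  rw [add, neg_bot, div_one]

theorem neg_add (x y : G) : ∼x ∔ y = x ⇒ y :=
  rfl

/-- The double negation law `¬¬x = x`. -/
class IsInvolutive (G : Type*) [LeftResiduatedPoGroupoid G] : Prop where
  double_neg : ∀ x : G, ∼∼x = x

/-- The Łukasiewicz identity `(x → y) → y = (y → x) → x`. -/
class IsLukasiewicz (G : Type*) [LeftResiduatedPoGroupoid G] : Prop where
  imp_imp_comm : ∀ x y : G, (x ⇒ y) ⇒ y = (y ⇒ x) ⇒ x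

open IsInvolutive IsLukasiewicz

section Involutive

variable [IsInvolutive G]

theorem mul_neg_self (x : G) : x * ∼x = ⊥ :=
  le_bot_iff.1 (mul_le_iff_le_div.2 (double_neg x).ge)

theorem le_imp (x y : G) : y ≤ x ⇒ y :=
  mul_le_iff_le_div.1 ((mul_neg_self y).trans_le bot_le)

theorem one_imp (x : G) : 1 ⇒ x = x := by
  rw [imp, neg_one, ← neg, double_neg]

theorem add_eq_neg_imp (x y : G) : x ∔ y = ∼x ⇒ y := by
  rw [← neg_add, double_neg]

theorem add_neg (x y : G) : x ∔ ∼y = x / y := by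
  rw [add, double_neg]

variable [IsLukasiewicz G]

theorem le_imp_imp (x y : G) : x ≤ (x ⇒ y) ⇒ y :=
  (le_imp (y ⇒ x) x).trans_eq (imp_imp_comm y x)

theorem le_of_neg_le_neg {x y : G} (h : ∼y ≤ ∼x) : x ≤ y :=
  calc
    x ≤ (x ⇒ y) ⇒ y := le_imp_imp x y
    _ = 1 ⇒ y := congrArg (· ⇒ y) (div_eq_one_iff.2 h)
    _ = y := one_imp y

theorem neg_le_neg_iff {x y : G} : ∼y ≤ ∼x ↔ x ≤ y :=
  ⟨le_of_neg_le_neg, fun h ↦ le_of_neg_le_neg (by rwa [double_neg, double_neg])⟩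

theorem imp_eq_one_iff {x y : G} : x ⇒ y = 1 ↔ x ≤ y :=
  div_eq_one_iff.trans neg_le_neg_iff

theorem mul_le_neg_neg_div (x y : G) : x * y ≤ ∼(∼x / y) := by
  have h : x ≤ ∼(∼x / ∼∼y) / ∼∼y := le_imp_imp x ∼y
  rw [double_neg] at h
  exact mul_le_iff_le_div.2 h

theorem neg_neg_div (x y : G) : ∼(∼x / y) = x * y := by
  refine le_antisymm (le_of_neg_le_neg ?_) (mul_le_neg_neg_div x y)
  rw [double_neg, ← mul_le_iff_le_div]
  calc
    ∼(x * y) * y ≤ ∼(∼∼(x * y) / y) := mul_le_neg_neg_div _ y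
    _ = ∼(x * y / y) := by rw [double_neg]
    _ ≤ ∼x := neg_le_neg_iff.2 (le_mul_div x y)

theorem neg_add_neg (x y : G) : ∼(∼x ∔ ∼y) = x * y := by
  rw [add_neg, neg_neg_div]

theorem neg_neg_add_add_le (x y : G) : ∼(∼(x ∔ y) ∔ y) ≤ x := by
  rw [add_eq_neg_imp x y, neg_add, ← neg_le_neg_iff, double_neg]
  exact le_imp_imp ∼x y

variable (G) in
theorem isBasicAlgebra : IsBasicAlgebra (add : G → G → G) neg ⊥ where
  add_zero := add_bot
  neg_neg := double_neg
  lukasiewicz := imp_imp_comm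
  add_left_mono x y w := by
    rw [neg_bot, neg_add, imp_eq_one_iff]
    exact div_le_div_right (neg_neg_add_add_le x y) ∼w

end Involutive

end LeftResiduatedPoGroupoid

/-- A bounded integral left-residuated po-groupoid with `¬¬x = x` and
`(x → y) → y = (y → x) → x` (where `x → y = ¬x/¬y`) gives a basic algebra via
`x ⊕ y = x/¬y`, with moreover `x ⊕ ¬y = x/y` and `¬(¬x ⊕ ¬y) = x·y`. -/
theorem stmt_2 {G : Type*} [PartialOrder G]
    (mul dvd : G → G → G) (z o : G)
    (hbot : ∀ x, z ≤ x) (htop : ∀ x, x ≤ o)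
    (honer : ∀ x, mul x o = x) (honel : ∀ x, mul o x = x)
    (hres : ∀ x y w, mul x y ≤ w ↔ x ≤ dvd w y)
    (neg : G → G) (hneg : ∀ x, neg x = dvd z x)
    (arr : G → G → G) (harr : ∀ x y, arr x y = dvd (neg x) (neg y))
    (hdn : ∀ x, neg (neg x) = x)
    (hw : ∀ x y, arr (arr x y) y = arr (arr y x) x)
    (op : G → G → G) (hop : ∀ x y, op x y = dvd x (neg y)) :
    (∀ x, op x z = x) ∧
    (∀ x, neg (neg x) = x) ∧
    (∀ x y, op (neg (op (neg x) y)) y = op (neg (op (neg y) x)) x) ∧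
    (∀ x y w, op (neg (op (neg (op (neg (op x y)) y)) w)) (op x w) = neg z) ∧
    (∀ x y, op x (neg y) = dvd x y) ∧
    (∀ x y, neg (op (neg x) (neg y)) = mul x y) := by
  let _ : LeftResiduatedPoGroupoid G :=
    { bot := z, bot_le := hbot, one := o, le_one := htop, mul := mul, mul_one := honer,
      one_mul := honel, div := dvd, mul_le_iff_le_div := hres _ _ _ }
  obtain rfl : neg = LeftResiduatedPoGroupoid.neg := funext hneg
  obtain rfl : arr = LeftResiduatedPoGroupoid.imp := funext₂ harr
  obtain rfl : op = LeftResiduatedPoGroupoid.add := funext₂ hop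
  have : LeftResiduatedPoGroupoid.IsInvolutive G := ⟨hdn⟩
  have : LeftResiduatedPoGroupoid.IsLukasiewicz G := ⟨hw⟩
  have basic := LeftResiduatedPoGroupoid.isBasicAlgebra G
  exact ⟨basic.add_zero, basic.neg_neg, basic.lukasiewicz, basic.add_left_mono,
    LeftResiduatedPoGroupoid.add_neg, LeftResiduatedPoGroupoid.neg_add_neg⟩
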